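/- arXiv:1009.5841 — 6 statements merged into one kernel-verified Lean document; each statement's English description precedes it below -/
import Mathlib

section
/- The model triangle in the hyperbolic plane is unique up to isometry: if p, q, r and p', q', r' are points of the upper half-plane ℍ (with its hyperbolic metric) satisfying dist p q = dist p' q', dist p r = dist p' r', and dist q r = dist q' r', then there exists an isometric equivalence e : ℍ ≃ᵢ ℍ with e p = p', e q = q', and e r = r'. -/
open UpperHalfPlane

open scoped ComplexConjugate MatrixGroups

/-!
Suppose that any point `a` of a metric space can be carried to any point `b` by a reflection in
their bisector, that is, by an isometry fixing every point equidistant from both. Then two finite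
families with the same mutual distances are congruent: match the points one at a time. If `e`
already matches some of them, reflect `e x` to the target `y` of the next point `x`; the targets
already reached are equidistant from `e x` and `y`, so they stay in place.

In the upper half-plane the bisector of `a` and `b` has an equation `d |z|² - 2 m Re z + k = 0`,
and `z ↦ (m z̄ - k) / (d z̄ - m)` is the reflection in it.
-/

section MetricSpace

variable {X : Type*} [PseudoMetricSpace X]

/-- Any point can be carried to any other by an isometry fixing all points equidistant from the
two, as the reflection in their perpendicular bisector does. -/
def HasBisectorReflections (X : Type*) [PseudoMetricSpace X] : Prop :=
  ∀ a b : X, ∃ e : X ≃ᵢ X, e a = b ∧ ∀ c, dist c a = dist c b → e c = c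

theorem HasBisectorReflections.exists_isometryEquiv_forall_mem_eq
    (hX : HasBisectorReflections X) {ι : Type*} {f g : ι → X} (s : Finset ι)
    (hfg : ∀ i ∈ s, ∀ j ∈ s, dist (f i) (f j) = dist (g i) (g j)) :
    ∃ e : X ≃ᵢ X, ∀ i ∈ s, e (f i) = g i := by
  classical
  induction s using Finset.induction_on with
  | empty => exact ⟨.refl X, by simp⟩
  | insert i s _ ih =>
    obtain ⟨e, he⟩ := ih fun j hj k hk =>
      hfg j (Finset.mem_insert_of_mem hj) k (Finset.mem_insert_of_mem hk)
    obtain ⟨ρ, hρi, hρ⟩ := hX (e (f i)) (g i)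
    refine ⟨e.trans ρ, Finset.forall_mem_insert _ _ _ |>.mpr ⟨hρi, fun j hj => ?_⟩⟩
    have hequidistant : dist (g j) (e (f i)) = dist (g j) (g i) :=
      calc dist (g j) (e (f i)) = dist (e (f j)) (e (f i)) := by rw [he j hj]
        _ = dist (f j) (f i) := e.dist_eq _ _
        _ = dist (g j) (g i) :=
          hfg j (Finset.mem_insert_of_mem hj) i (Finset.mem_insert_self i s)
    rw [IsometryEquiv.trans_apply, he j hj, hρ _ hequidistant]

end MetricSpace

section Isometry

theorem dist_eq_dist_iff_dist_coe_sq_mul_im {a b c d : ℍ} :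
    dist a b = dist c d ↔
      dist (a : ℂ) b ^ 2 * (c.im * d.im) = dist (c : ℂ) d ^ 2 * (a.im * b.im) := by
  have := a.im_ne_zero
  have := b.im_ne_zero
  have := c.im_ne_zero
  have := d.im_ne_zero
  rw [← Real.cosh_strictMonoOn.injOn.eq_iff dist_nonneg dist_nonneg, cosh_dist, cosh_dist,
    add_right_inj]
  field_simp

theorem dist_coe_gl_smul (g : GL (Fin 2) ℝ) (z w : ℍ) :
    dist ((g • z : ℍ) : ℂ) (g • w : ℍ) =
      |g.det.val| * dist (z : ℂ) w / (‖denom g z‖ * ‖denom g w‖) := by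
  have hsub : num g z / denom g z - num g w / denom g w =
      (g.det.val : ℂ) * (z - w) / (denom g z * denom g w) := by
    rw [div_sub_div _ _ (denom_ne_zero g z) (denom_ne_zero g w)]
    congr 1
    simp only [num, denom, Matrix.GeneralLinearGroup.val_det_apply, Matrix.det_fin_two]
    push_cast
    ring
  rw [coe_smul, coe_smul, dist_eq_norm, ← map_sub, norm_σ, hsub, norm_div, norm_mul, norm_mul,
    Complex.norm_real, Real.norm_eq_abs, dist_eq_norm]

instance : IsIsometricSMul (GL (Fin 2) ℝ) ℍ where
  isometry_smul g := Isometry.of_dist_eq fun z w => by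
    have := norm_ne_zero_iff.mpr (denom_ne_zero g z)
    have := norm_ne_zero_iff.mpr (denom_ne_zero g w)
    rw [dist_eq_dist_iff_dist_coe_sq_mul_im, dist_coe_gl_smul, im_smul_eq_div_normSq,
      im_smul_eq_div_normSq, Complex.normSq_eq_norm_sq, Complex.normSq_eq_norm_sq]
    field_simp

theorem gl_smul_eq_iff_num_conj_eq {g : GL (Fin 2) ℝ} (hg : g.val.det < 0) {z w : ℍ} :
    g • z = w ↔ num g (conj (z : ℂ)) = w * denom g (conj (z : ℂ)) := by
  have hσ (u : ℂ) : σ g u = conj u := by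
    rw [σ, Matrix.GeneralLinearGroup.val_det_apply, if_neg hg.not_gt]
    rfl
  rw [gl_smul_eq_iff_num_eq, ← EmbeddingLike.apply_eq_iff_eq (σ g), map_mul, σ_sq, σ_num, σ_denom,
    hσ]

end Isometry

section Reflection

variable {a b : ℍ}

theorem dist_eq_dist_iff_bisector_equation {c : ℍ} :
    dist c a = dist c b ↔
      (b.im - a.im) * Complex.normSq c - 2 * (b.im * a.re - a.im * b.re) * c.re
        + (b.im * Complex.normSq a - a.im * Complex.normSq b) = 0 := by
  rw [dist_eq_dist_iff_dist_coe_sq_mul_im, mul_left_comm, mul_left_comm _ c.im,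
    mul_right_inj' c.im_ne_zero, ← sub_eq_zero, dist_eq_norm, dist_eq_norm,
    ← Complex.normSq_eq_norm_sq, ← Complex.normSq_eq_norm_sq]
  simp only [Complex.normSq_apply, Complex.sub_re, Complex.sub_im, coe_re, coe_im]
  ring_nf

/-- The matrix `!![m, -k; d, -m]`, where `d |z|² - 2 m Re z + k = 0` is the equation of the
perpendicular bisector of `a` and `b` given by `dist_eq_dist_iff_bisector_equation`. -/
def bisectorMatrix (a b : ℍ) : Matrix (Fin 2) (Fin 2) ℝ :=
  !![b.im * a.re - a.im * b.re, a.im * Complex.normSq b - b.im * Complex.normSq a;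
    b.im - a.im, a.im * b.re - b.im * a.re]

theorem det_bisectorMatrix (a b : ℍ) :
    (bisectorMatrix a b).det = -(a.im * b.im * dist (a : ℂ) b ^ 2) := by
  rw [bisectorMatrix, Matrix.det_fin_two_of, dist_eq_norm, ← Complex.normSq_eq_norm_sq]
  simp only [Complex.normSq_apply, Complex.sub_re, Complex.sub_im, coe_re, coe_im]
  ring

theorem det_bisectorMatrix_neg (hab : a ≠ b) : (bisectorMatrix a b).det < 0 := by
  have : 0 < dist (a : ℂ) b := dist_pos.mpr (mt UpperHalfPlane.ext hab)
  rw [det_bisectorMatrix, neg_lt_zero]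
  positivity

/-- The element of `GL(2, ℝ)` acting on the upper half-plane as the reflection in the perpendicular
bisector of two distinct points. -/
noncomputable def bisectorReflection (hab : a ≠ b) : GL (Fin 2) ℝ :=
  .mkOfDetNeZero (bisectorMatrix a b) (det_bisectorMatrix_neg hab).ne

theorem val_bisectorReflection (hab : a ≠ b) :
    (bisectorReflection hab).val = bisectorMatrix a b := rfl

theorem bisectorReflection_smul_eq_iff (hab : a ≠ b) {z w : ℍ} :
    bisectorReflection hab • z = w ↔
      (b.im * a.re - a.im * b.re) * conj (z : ℂ)
          + (a.im * Complex.normSq b - b.im * Complex.normSq a) =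
        w * ((b.im - a.im) * conj (z : ℂ) + (a.im * b.re - b.im * a.re)) := by
  have hdet : (bisectorReflection hab).val.det < 0 := det_bisectorMatrix_neg hab
  rw [gl_smul_eq_iff_num_conj_eq hdet, num, denom, val_bisectorReflection]
  simp [bisectorMatrix]

theorem bisectorReflection_smul_left (hab : a ≠ b) : bisectorReflection hab • a = b := by
  rw [bisectorReflection_smul_eq_iff]
  simp only [Complex.normSq_eq_conj_mul_self, ← coe_re, ← coe_im, Complex.re_eq_add_conj,
    Complex.im_eq_sub_conj]
  ring

theorem bisectorReflection_smul_eq_self_iff (hab : a ≠ b) {c : ℍ} :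
    bisectorReflection hab • c = c ↔ dist c a = dist c b := by
  rw [bisectorReflection_smul_eq_iff, dist_eq_dist_iff_bisector_equation,
    ← Complex.ofReal_eq_zero]
  push_cast
  rw [Complex.normSq_eq_conj_mul_self (z := c), ← coe_re c, Complex.re_eq_add_conj]
  constructor <;> intro h <;> linear_combination -h

theorem hasBisectorReflections_upperHalfPlane : HasBisectorReflections ℍ := by
  intro a b
  rcases eq_or_ne a b with rfl | hab
  · exact ⟨.refl ℍ, rfl, fun _ _ => rfl⟩
  · exact ⟨.constSMul (bisectorReflection hab), bisectorReflection_smul_left hab,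
      fun _ => (bisectorReflection_smul_eq_self_iff hab).mpr⟩

end Reflection

theorem hyperbolic_model_triangle_unique_up_to_isometry_general {ι : Type*} [Finite ι]
    (f g : ι → ℍ) (hfg : ∀ i j, dist (f i) (f j) = dist (g i) (g j)) :
    ∃ e : ℍ ≃ᵢ ℍ, ∀ i, e (f i) = g i := by
  have := Fintype.ofFinite ι
  simpa using hasBisectorReflections_upperHalfPlane.exists_isometryEquiv_forall_mem_eq
    Finset.univ fun i _ j _ => hfg i j

/-- The hyperbolic model triangle is unique up to an isometry of the
hyperbolic plane (the upper half-plane with its hyperbolic metric). -/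
theorem hyperbolic_model_triangle_unique_up_to_isometry
    (p q r p' q' r' : UpperHalfPlane)
    (hpq : dist p q = dist p' q') (hpr : dist p r = dist p' r')
    (hqr : dist q r = dist q' r') :
    ∃ e : UpperHalfPlane ≃ᵢ UpperHalfPlane,
      e p = p' ∧ e q = q' ∧ e r = r' := by
  simpa [Fin.forall_fin_succ] using
    hyperbolic_model_triangle_unique_up_to_isometry_general ![p, q, r] ![p', q', r']
      (by simp [Fin.forall_fin_succ, dist_comm, *])
end

section
/- The comparison angle is monotone increasing in the curvature κ (case κ = −1 versus κ = 0): if a, b, c are positive reals satisfying the strict triangle inequalities a < b + c, b < a + c, c < a + b, then Real.arccos((Real.cosh a * Real.cosh b − Real.cosh c)/(Real.sinh a * Real.sinh b)) ≤ Real.arccos((a^2 + b^2 − c^2)/(2*a*b)). -/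
/-!
If `x` is the cosine of the Euclidean comparison angle, then
`c² = (1 + x) / 2 * (a - b)² + (1 - x) / 2 * (a + b)²` is a convex combination. The power series of
`t ↦ cosh √t` has nonnegative coefficients, so this function is convex on `[0, ∞)`, and evaluating
it along the combination gives `cosh c ≤ cosh a * cosh b - x * sinh a * sinh b`: for the same two
sides and the same angle, the third side is at least as long in the hyperbolic plane. Keeping the
third side equal to `c` therefore forces a smaller angle there.
-/

open Set

theorem convexOn_of_hasSum {𝕜 E β ι : Type*} [Semiring 𝕜] [PartialOrder 𝕜] [AddCommMonoid E]
    [SMul 𝕜 E] [AddCommMonoid β] [PartialOrder β] [IsOrderedAddMonoid β] [TopologicalSpace β]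
    [ContinuousAdd β] [OrderClosedTopology β] [DistribSMul 𝕜 β] [ContinuousConstSMul 𝕜 β]
    {s : Set E} {f : ι → E → β} {g : E → β} (hs : Convex 𝕜 s) (hf : ∀ i, ConvexOn 𝕜 s (f i))
    (hg : ∀ x ∈ s, HasSum (fun i ↦ f i x) (g x)) : ConvexOn 𝕜 s g :=
  ⟨hs, fun x hx y hy p q hp hq hpq ↦
    hasSum_le (fun i ↦ (hf i).2 hx hy hp hq hpq) (hg _ (hs hx hy hp hq hpq))
      (((hg x hx).const_smul p).add ((hg y hy).const_smul q))⟩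

theorem hasSum_cosh_sqrt {t : ℝ} (ht : 0 ≤ t) :
    HasSum (fun n : ℕ ↦ t ^ n / ((2 * n).factorial : ℝ)) (Real.cosh √t) := by
  simpa only [pow_mul, Real.sq_sqrt ht] using Real.hasSum_cosh √t

theorem convexOn_cosh_sqrt : ConvexOn ℝ (Ici 0) fun t : ℝ ↦ Real.cosh √t :=
  have hterm (n : ℕ) : ConvexOn ℝ (Ici 0) fun t : ℝ ↦ t ^ n / ((2 * n).factorial : ℝ) :=
    ((convexOn_pow n).smul (inv_nonneg.2 (Nat.cast_nonneg (2 * n).factorial))).congr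
      fun _ _ ↦ (div_eq_inv_mul _ _).symm
  convexOn_of_hasSum (convex_Ici 0) hterm fun _ ↦ hasSum_cosh_sqrt

theorem cosh_sqrt_law_of_cosines_le (a b : ℝ) {x : ℝ} (hx : x ∈ Icc (-1) 1) :
    Real.cosh √(a ^ 2 + b ^ 2 - 2 * a * b * x) ≤
      Real.cosh a * Real.cosh b - x * (Real.sinh a * Real.sinh b) := by
  obtain ⟨hx_ge, hx_le⟩ := hx
  calc Real.cosh √(a ^ 2 + b ^ 2 - 2 * a * b * x)
      = Real.cosh √((1 + x) / 2 * (a - b) ^ 2 + (1 - x) / 2 * (a + b) ^ 2) := by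
        congr 2
        ring
    _ ≤ (1 + x) / 2 * Real.cosh √((a - b) ^ 2) + (1 - x) / 2 * Real.cosh √((a + b) ^ 2) := by
        simpa only [smul_eq_mul] using
          convexOn_cosh_sqrt.2 (mem_Ici.2 (sq_nonneg (a - b))) (mem_Ici.2 (sq_nonneg (a + b)))
            (by linarith : 0 ≤ (1 + x) / 2) (by linarith : 0 ≤ (1 - x) / 2) (by ring)
    _ = Real.cosh a * Real.cosh b - x * (Real.sinh a * Real.sinh b) := by
        simp only [Real.sqrt_sq_eq_abs, Real.cosh_abs, Real.cosh_sub, Real.cosh_add]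
        ring

theorem euclidean_cos_mem_Icc {a b c : ℝ} (ha : 0 < a) (hb : 0 < b)
    (habc : a ≤ b + c) (hbac : b ≤ a + c) (hcab : c ≤ a + b) :
    (a ^ 2 + b ^ 2 - c ^ 2) / (2 * a * b) ∈ Icc (-1) 1 := by
  have hab : 0 < 2 * a * b := by positivity
  have hc_ge : (a - b) ^ 2 ≤ c ^ 2 := sq_le_sq' (by linarith) (by linarith)
  have hc_le : c ^ 2 ≤ (a + b) ^ 2 := sq_le_sq' (by linarith) hcab
  rw [mem_Icc, le_div_iff₀ hab, div_le_one hab]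
  constructor <;> linarith

theorem euclidean_cos_le_hyperbolic_cos {a b c : ℝ} (ha : 0 < a) (hb : 0 < b)
    (habc : a ≤ b + c) (hbac : b ≤ a + c) (hcab : c ≤ a + b) :
    (a ^ 2 + b ^ 2 - c ^ 2) / (2 * a * b) ≤
      (Real.cosh a * Real.cosh b - Real.cosh c) / (Real.sinh a * Real.sinh b) := by
  have hsinh : 0 < Real.sinh a * Real.sinh b :=
    mul_pos (Real.sinh_pos_iff.2 ha) (Real.sinh_pos_iff.2 hb)
  have hcosh := cosh_sqrt_law_of_cosines_le a b (euclidean_cos_mem_Icc ha hb habc hbac hcab)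
  have hc_sq : a ^ 2 + b ^ 2 - 2 * a * b * ((a ^ 2 + b ^ 2 - c ^ 2) / (2 * a * b)) = c ^ 2 := by
    rw [mul_div_cancel₀ _ (by positivity), sub_sub_cancel]
  rw [hc_sq, Real.sqrt_sq_eq_abs, Real.cosh_abs] at hcosh
  rwa [le_div_iff₀ hsinh, le_sub_comm]

/-- The comparison angle is monotone increasing in the curvature κ:
case κ = -1 (hyperbolic law of cosines) versus κ = 0 (Euclidean law of
cosines). -/
theorem comparison_angle_mono_kappa_neg_one_le_zero
    (a b c : ℝ) (ha : 0 < a) (hb : 0 < b) (hc : 0 < c)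
    (habc : a < b + c) (hbac : b < a + c) (hcab : c < a + b) :
    Real.arccos ((Real.cosh a * Real.cosh b - Real.cosh c) /
        (Real.sinh a * Real.sinh b)) ≤
      Real.arccos ((a ^ 2 + b ^ 2 - c ^ 2) / (2 * a * b)) :=
  Real.arccos_le_arccos (euclidean_cos_le_hyperbolic_cos ha hb habc.le hbac.le hcab.le)
end

section
/- The comparison angle is monotone increasing in the curvature κ (case κ = 0 versus κ = 1): if a, b, c are reals with 0 < a < π, 0 < b < π, 0 < c < π, satisfying the strict triangle inequalities a < b + c, b < a + c, c < a + b, and a + b + c < 2π, then Real.arccos((a^2 + b^2 − c^2)/(2*a*b)) ≤ Real.arccos((Real.cos c − Real.cos a * Real.cos b)/(Real.sin a * Real.sin b)). -/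
/-!
In a triangle with sides `a`, `b` enclosing an angle `γ` opposite to `c`, the half-angle formulas
with `p = (c + a - b) / 2` and `q = (c - a + b) / 2` give `sin² (γ / 2) = (p / a) * (q / b)` in the
Euclidean plane and `sin² (γ / 2) = (sin p / sin a) * (sin q / sin b)` on the unit sphere.
The triangle inequality says `p ≤ a` and `q ≤ b`, and `sin x / x` decreases on `(0, π]`,
so each Euclidean factor is at most the corresponding spherical one.
-/

open Real Set

lemma antitoneOn_sin_div_self : AntitoneOn (fun x : ℝ ↦ sin x / x) (Ioc 0 π) := by
  intro x hx y hy hxy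
  have hslope := strictConcaveOn_sin_Icc.concaveOn.slope_anti (left_mem_Icc.2 pi_pos.le)
    ⟨⟨hx.1.le, hx.2⟩, hx.1.ne'⟩ ⟨⟨hy.1.le, hy.2⟩, hy.1.ne'⟩ hxy
  simpa only [slope_def_field, sin_zero, sub_zero] using hslope

lemma div_le_sin_div_sin {x y : ℝ} (hx : 0 ≤ x) (hxy : x ≤ y) (hy : y < π) :
    x / y ≤ sin x / sin y := by
  rcases hx.eq_or_lt with rfl | hx
  · simp only [zero_div, sin_zero, le_refl]
  have hy₀ : 0 < y := hx.trans_le hxy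
  have hsin : sin y / y ≤ sin x / x :=
    antitoneOn_sin_div_self ⟨hx, hxy.trans hy.le⟩ ⟨hy₀, hy.le⟩ hxy
  rw [div_le_div_iff₀ hy₀ hx] at hsin
  rw [div_le_div_iff₀ hy₀ (sin_pos_of_pos_of_lt_pi hy₀ hy)]
  linarith

lemma one_sub_euclidean_cos_rule {K : Type*} [Field K] [NeZero (2 : K)] {a b : K}
    (ha : a ≠ 0) (hb : b ≠ 0) (c : K) :
    1 - (a ^ 2 + b ^ 2 - c ^ 2) / (2 * a * b) =
      2 * ((c + a - b) / 2 / a * ((c - a + b) / 2 / b)) := by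
  have h2 : (2 : K) ≠ 0 := two_ne_zero
  field_simp
  ring

lemma one_sub_spherical_cos_rule {a b : ℝ} (ha : sin a ≠ 0) (hb : sin b ≠ 0) (c : ℝ) :
    1 - (cos c - cos a * cos b) / (sin a * sin b) =
      2 * (sin ((c + a - b) / 2) / sin a * (sin ((c - a + b) / 2) / sin b)) := by
  have hprod : 2 * sin ((c + a - b) / 2) * sin ((c - a + b) / 2) = cos (a - b) - cos c := by
    rw [two_mul_sin_mul_sin]
    ring_nf
  rw [cos_sub] at hprod
  field_simp
  linear_combination -hprod

lemma spherical_cos_rule_le_euclidean_cos_rule {a b c : ℝ}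
    (ha : 0 < a) (haπ : a < π) (hb : 0 < b) (hbπ : b < π)
    (habc : a ≤ b + c) (hbac : b ≤ a + c) (hcab : c ≤ a + b) :
    (cos c - cos a * cos b) / (sin a * sin b) ≤ (a ^ 2 + b ^ 2 - c ^ 2) / (2 * a * b) := by
  have hsa : 0 < sin a := sin_pos_of_pos_of_lt_pi ha haπ
  have hsb : 0 < sin b := sin_pos_of_pos_of_lt_pi hb hbπ
  have hp₀ : 0 ≤ (c + a - b) / 2 := by linarith
  have hq₀ : 0 ≤ (c - a + b) / 2 := by linarith
  have hp : (c + a - b) / 2 / a ≤ sin ((c + a - b) / 2) / sin a :=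
    div_le_sin_div_sin hp₀ (by linarith) haπ
  have hq : (c - a + b) / 2 / b ≤ sin ((c - a + b) / 2) / sin b :=
    div_le_sin_div_sin hq₀ (by linarith) hbπ
  rw [← sub_le_sub_iff_left 1, one_sub_euclidean_cos_rule ha.ne' hb.ne',
    one_sub_spherical_cos_rule hsa.ne' hsb.ne']
  have hp_nonneg := (div_nonneg hp₀ ha.le).trans hp
  gcongr

/-- The comparison angle is monotone increasing in the curvature κ:
case κ = 0 (Euclidean law of cosines) versus κ = 1 (spherical law of
cosines on the unit sphere). -/
theorem comparison_angle_mono_kappa_zero_le_one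
    (a b c : ℝ) (ha : 0 < a) (ha' : a < Real.pi)
    (hb : 0 < b) (hb' : b < Real.pi) (hc : 0 < c) (hc' : c < Real.pi)
    (habc : a < b + c) (hbac : b < a + c) (hcab : c < a + b)
    (hper : a + b + c < 2 * Real.pi) :
    Real.arccos ((a ^ 2 + b ^ 2 - c ^ 2) / (2 * a * b)) ≤
      Real.arccos ((Real.cos c - Real.cos a * Real.cos b) /
        (Real.sin a * Real.sin b)) :=
  Real.arccos_le_arccos <|
    spherical_cos_rule_le_euclidean_cos_rule ha ha' hb hb' habc.le hbac.le hcab.le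
end

section
/- (Euclidean case of Proposition 6.5.) Let (X, d) be a metric space and let x₁, x₂, x₃, x₄ ∈ X be four pairwise distinct points forming a nondegenerate quadruple, i.e. d(x_i, x_k) < d(x_i, x_j) + d(x_j, x_k) for all pairwise distinct indices i, j, k. Then there exist points p₁, p₂, p₃, p₄ in EuclideanSpace ℝ (Fin 3) with dist p_i p_j = d(x_i, x_j) for all i, j, if and only if for every index i the following two conditions hold, where {j, l, m} = {1,2,3,4} \ {i}: (i) α₀(x_i; x_j, x_l) + α₀(x_i; x_j, x_m) + α₀(x_i; x_l, x_m) ≤ 2π, and (ii) each of the three angles α₀(x_i; x_j, x_l), α₀(x_i; x_j, x_m), α₀(x_i; x_l, x_m) is at most the sum of the other two. -/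
/-- The Euclidean comparison angle at `x` subtended by `y` and `z`:
the angle at the vertex corresponding to `x` of the Euclidean model
triangle with side lengths `dist x y`, `dist x z`, `dist y z`. -/
noncomputable def comparisonAngle₀ {X : Type*} [MetricSpace X] (x y z : X) : ℝ :=
  Real.arccos ((dist x y ^ 2 + dist x z ^ 2 - dist y z ^ 2) /
    (2 * dist x y * dist x z))

/-!
Three numbers are the angles between three vectors of a Euclidean space exactly when they are the
side lengths of a possibly degenerate triangle on the unit sphere, and `ℝ³` already suffices.
Given an isometric copy of the quadruple, the comparison angles at `x i` are the angles between the
vectors from `p i` to the other three points. Conversely, place `x i` at the origin and the other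
three points at their distances from `x i` along unit vectors that enclose the comparison angles:
the law of cosines gives the remaining three distances. So the conditions at one point suffice.
-/

section SphericalTriangle

open Real InnerProductGeometry

/-- `a`, `b`, `c` are the side lengths of a possibly degenerate geodesic triangle on the unit
sphere. That the sides lie in `[0, π]` follows from these four inequalities. -/
structure IsSphericalTriangle (a b c : ℝ) : Prop where
  perimeter_le : a + b + c ≤ 2 * π
  fst_le : a ≤ b + c
  snd_le : b ≤ a + c
  thd_le : c ≤ a + b

namespace IsSphericalTriangle

variable {a b c : ℝ}

lemma rotate (h : IsSphericalTriangle a b c) : IsSphericalTriangle b c a where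
  perimeter_le := by linarith [h.perimeter_le]
  fst_le := by linarith [h.snd_le]
  snd_le := by linarith [h.thd_le]
  thd_le := h.fst_le

lemma mem_Icc (h : IsSphericalTriangle a b c) : a ∈ Set.Icc 0 π :=
  ⟨by linarith [h.snd_le, h.thd_le], by linarith [h.perimeter_le, h.fst_le]⟩

lemma cos_add_le_cos (h : IsSphericalTriangle a b c) : cos (a + b) ≤ cos c := by
  have hc : 0 ≤ c := h.rotate.rotate.mem_Icc.1
  rcases le_total (a + b) π with hab | hab
  · exact cos_le_cos_of_nonneg_of_le_pi hc hab h.thd_le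
  · rw [← cos_two_pi_sub (a + b)]
    exact cos_le_cos_of_nonneg_of_le_pi hc (by linarith) (by linarith [h.perimeter_le])

lemma cos_le_cos_sub (h : IsSphericalTriangle a b c) : cos c ≤ cos (a - b) := by
  have hc : c ≤ π := h.rotate.rotate.mem_Icc.2
  rw [← cos_abs (a - b)]
  exact cos_le_cos_of_nonneg_of_le_pi (abs_nonneg _) hc
    (abs_le.2 ⟨by linarith [h.snd_le], by linarith [h.fst_le]⟩)

-- `φ` is the angle of the triangle opposite `c`, as in the spherical law of cosines: opening it
-- from `0` to `π` moves the cosine of the third side from `cos (a - b)` to `cos (a + b)`.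
lemma exists_cos_eq (h : IsSphericalTriangle a b c) :
    ∃ φ, cos c = cos a * cos b + sin a * sin b * cos φ := by
  have hcont : Continuous fun φ => cos a * cos b + sin a * sin b * cos φ := by fun_prop
  obtain ⟨φ, hφ⟩ : cos c ∈ Set.range fun φ => cos a * cos b + sin a * sin b * cos φ := by
    refine intermediate_value_univ π 0 hcont ⟨?_, ?_⟩
    · simpa [cos_add, ← sub_eq_add_neg] using h.cos_add_le_cos
    · simpa [cos_sub] using h.cos_le_cos_sub
  exact ⟨φ, hφ.symm⟩

end IsSphericalTriangle

section InnerProductSpace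

variable {V : Type*} [NormedAddCommGroup V] [InnerProductSpace ℝ V]

lemma isSphericalTriangle_angle (u v w : V) :
    IsSphericalTriangle (angle u v) (angle u w) (angle v w) where
  perimeter_le := by
    have h := angle_le_angle_add_angle u (-w) v
    rw [angle_neg_right, angle_neg_left, angle_comm w v] at h
    linarith
  fst_le := angle_comm v w ▸ angle_le_angle_add_angle u w v
  snd_le := angle_le_angle_add_angle u v w
  thd_le := angle_comm u v ▸ angle_le_angle_add_angle v u w

lemma angle_eq_of_inner_eq_cos {u v : V} {a : ℝ} (hu : ‖u‖ = 1) (hv : ‖v‖ = 1)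
    (ha : a ∈ Set.Icc 0 π) (h : inner ℝ u v = cos a) : angle u v = a := by
  rw [angle, hu, hv, h, mul_one, div_one, arccos_cos ha.1 ha.2]

end InnerProductSpace

theorem IsSphericalTriangle.exists_angle_eq {a b c : ℝ} (h : IsSphericalTriangle a b c) :
    ∃ u v w : EuclideanSpace ℝ (Fin 3), ‖u‖ = 1 ∧ ‖v‖ = 1 ∧ ‖w‖ = 1 ∧
      angle u v = a ∧ angle u w = b ∧ angle v w = c := by
  obtain ⟨φ, hφ⟩ := h.exists_cos_eq
  let u : EuclideanSpace ℝ (Fin 3) := !₂[1, 0, 0]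
  let v : EuclideanSpace ℝ (Fin 3) := !₂[cos a, sin a, 0]
  let w : EuclideanSpace ℝ (Fin 3) := !₂[cos b, sin b * cos φ, sin b * sin φ]
  have hu : ‖u‖ = 1 := by simp [u, EuclideanSpace.norm_eq, Fin.sum_univ_three]
  have hv : ‖v‖ = 1 := by simp [v, EuclideanSpace.norm_eq, Fin.sum_univ_three]
  have hw : ‖w‖ = 1 := by
    rw [← sq_eq_sq₀ (norm_nonneg w) zero_le_one, EuclideanSpace.real_norm_sq_eq,
      Fin.sum_univ_three]
    simp only [w, Matrix.cons_val]
    linear_combination sin b ^ 2 * sin_sq_add_cos_sq φ + sin_sq_add_cos_sq b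
  have huv : inner ℝ u v = cos a := by simp [u, v, PiLp.inner_apply, Fin.sum_univ_three]
  have huw : inner ℝ u w = cos b := by simp [u, w, PiLp.inner_apply, Fin.sum_univ_three]
  have hvw : inner ℝ v w = cos c := by
    simp only [v, w, PiLp.inner_apply, Fin.sum_univ_three, Matrix.cons_val,
      RCLike.inner_apply, conj_trivial]
    linear_combination -hφ
  exact ⟨u, v, w, hu, hv, hw, angle_eq_of_inner_eq_cos hu hv h.mem_Icc huv,
    angle_eq_of_inner_eq_cos hu hw h.rotate.mem_Icc huw,
    angle_eq_of_inner_eq_cos hv hw h.rotate.rotate.mem_Icc hvw⟩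

end SphericalTriangle

section ComparisonAngle

open Real InnerProductGeometry
open scoped EuclideanGeometry

variable {X : Type*} [MetricSpace X]
variable {V : Type*} [NormedAddCommGroup V] [InnerProductSpace ℝ V]

lemma comparisonAngle₀_comm (x y z : X) : comparisonAngle₀ x y z = comparisonAngle₀ x z y := by
  rw [comparisonAngle₀, comparisonAngle₀, dist_comm y z, add_comm, mul_right_comm]

lemma cos_comparisonAngle₀ (x y z : X) :
    cos (comparisonAngle₀ x y z) =
      (dist x y ^ 2 + dist x z ^ 2 - dist y z ^ 2) / (2 * dist x y * dist x z) := by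
  have hlower : (dist x y - dist x z) ^ 2 ≤ dist y z ^ 2 := by
    rw [dist_comm x y, dist_comm x z, sq_le_sq, abs_of_nonneg (dist_nonneg (x := y))]
    exact abs_dist_sub_le y z x
  have hupper : dist y z ^ 2 ≤ (dist x y + dist x z) ^ 2 :=
    pow_le_pow_left₀ dist_nonneg (dist_triangle_left y z x) 2
  have habs : |dist x y ^ 2 + dist x z ^ 2 - dist y z ^ 2| ≤ 2 * dist x y * dist x z :=
    abs_le.2 ⟨by linarith, by linarith⟩
  have hratio : |(dist x y ^ 2 + dist x z ^ 2 - dist y z ^ 2) / (2 * dist x y * dist x z)| ≤ 1 := by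
    rw [abs_div, abs_of_nonneg (by positivity : 0 ≤ 2 * dist x y * dist x z)]
    exact div_le_one_of_le₀ habs (by positivity)
  exact cos_arccos (abs_le.1 hratio).1 (abs_le.1 hratio).2

lemma dist_sq_eq_sub_cos_comparisonAngle₀ (x y z : X) :
    dist y z ^ 2 = dist x y ^ 2 + dist x z ^ 2 -
      2 * dist x y * dist x z * cos (comparisonAngle₀ x y z) := by
  rcases eq_or_ne x y with rfl | hy
  · simp
  rcases eq_or_ne x z with rfl | hz
  · simp [dist_comm]
  have hy' : dist x y ≠ 0 := dist_ne_zero.2 hy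
  have hz' : dist x z ≠ 0 := dist_ne_zero.2 hz
  rw [cos_comparisonAngle₀]
  field_simp
  ring

lemma comparisonAngle₀_eq_angle {P : Type*} [MetricSpace P] [NormedAddTorsor V P] {x y z : X}
    {p q r : P} (hy : x ≠ y) (hz : x ≠ z) (hpq : dist p q = dist x y) (hpr : dist p r = dist x z)
    (hqr : dist q r = dist y z) : comparisonAngle₀ x y z = ∠ q p r := by
  have hmem : comparisonAngle₀ x y z ∈ Set.Icc 0 π := ⟨arccos_nonneg _, arccos_le_pi _⟩
  refine injOn_cos hmem ⟨angle_nonneg _ _, angle_le_pi _ _⟩ ?_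
  have hne : 2 * dist x y * dist x z ≠ 0 := by simp [dist_ne_zero.2 hy, dist_ne_zero.2 hz]
  have hlaw := EuclideanGeometry.law_cos q p r
  rw [dist_comm q p, dist_comm r p, hpq, hpr, hqr] at hlaw
  refine mul_left_cancel₀ hne ?_
  linear_combination dist_sq_eq_sub_cos_comparisonAngle₀ x y z - hlaw

lemma dist_smul_smul_of_angle_eq_comparisonAngle₀ {x y z : X} {u v : V} (hu : ‖u‖ = 1)
    (hv : ‖v‖ = 1) (huv : angle u v = comparisonAngle₀ x y z) :
    dist (dist x y • u) (dist x z • v) = dist y z := by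
  have hinner : inner ℝ u v = cos (comparisonAngle₀ x y z) := by
    rw [inner_eq_cos_angle_of_norm_eq_one hu hv, huv]
  rw [← sq_eq_sq₀ dist_nonneg dist_nonneg, dist_sq_eq_sub_cos_comparisonAngle₀ x y z, dist_eq_norm,
    norm_sub_sq_real, norm_smul_of_nonneg dist_nonneg, norm_smul_of_nonneg dist_nonneg,
    real_inner_smul_left, real_inner_smul_right, hu, hv, hinner]
  ring

theorem exists_dist_eq_of_angle_eq_comparisonAngle₀ {n : ℕ} {x : Fin (n + 1) → X} {i : Fin (n + 1)}
    {u : Fin n → V} (hu : ∀ k, ‖u k‖ = 1)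
    (hangle : ∀ k l, k < l →
      angle (u k) (u l) = comparisonAngle₀ (x i) (x (i.succAbove k)) (x (i.succAbove l))) :
    ∃ p : Fin (n + 1) → V, ∀ a b, dist (p a) (p b) = dist (x a) (x b) := by
  let q (k : Fin n) : V := dist (x i) (x (i.succAbove k)) • u k
  have hradial (k : Fin n) : ‖q k‖ = dist (x i) (x (i.succAbove k)) := by
    rw [norm_smul_of_nonneg dist_nonneg, hu, mul_one]
  have hlt (k l : Fin n) (hkl : k < l) :
      dist (q k) (q l) = dist (x (i.succAbove k)) (x (i.succAbove l)) :=
    dist_smul_smul_of_angle_eq_comparisonAngle₀ (hu k) (hu l) (hangle k l hkl)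
  have hq (k l : Fin n) : dist (q k) (q l) = dist (x (i.succAbove k)) (x (i.succAbove l)) := by
    rcases lt_trichotomy k l with hkl | rfl | hkl
    · exact hlt k l hkl
    · rw [dist_self, dist_self]
    · rw [dist_comm, hlt l k hkl, dist_comm]
  refine ⟨i.insertNth 0 q, ?_⟩
  simp only [Fin.forall_iff_succAbove i, Fin.insertNth_apply_same, Fin.insertNth_apply_succAbove]
  refine ⟨⟨by rw [dist_self, dist_self], fun k => ?_⟩, fun k => ⟨?_, hq k⟩⟩
  · rw [dist_zero_left, hradial]
  · rw [dist_zero_right, hradial, dist_comm]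

theorem IsSphericalTriangle.exists_dist_eq {x : Fin 4 → X} {i : Fin 4}
    (h : IsSphericalTriangle
      (comparisonAngle₀ (x i) (x (i.succAbove 0)) (x (i.succAbove 1)))
      (comparisonAngle₀ (x i) (x (i.succAbove 0)) (x (i.succAbove 2)))
      (comparisonAngle₀ (x i) (x (i.succAbove 1)) (x (i.succAbove 2)))) :
    ∃ p : Fin 4 → EuclideanSpace ℝ (Fin 3), ∀ a b, dist (p a) (p b) = dist (x a) (x b) := by
  obtain ⟨u, v, w, hu, hv, hw, huv, huw, hvw⟩ := h.exists_angle_eq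
  refine exists_dist_eq_of_angle_eq_comparisonAngle₀ (i := i) (u := ![u, v, w]) ?_ ?_
  · simp [Fin.forall_fin_succ, hu, hv, hw]
  · simp [Fin.forall_fin_succ, huv, huw, hvw]

end ComparisonAngle

theorem quadruple_embeds_iff_comparison_angle_conditions_general
    {X : Type*} [MetricSpace X] (x : Fin 4 → X) (i : Fin 4) (hi : ∀ j, i ≠ j → x i ≠ x j) :
    (∃ p : Fin 4 → EuclideanSpace ℝ (Fin 3),
        ∀ a b, dist (p a) (p b) = dist (x a) (x b)) ↔
      (∀ j l m : Fin 4, i ≠ j → i ≠ l → i ≠ m → j ≠ l → j ≠ m → l ≠ m →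
        (comparisonAngle₀ (x i) (x j) (x l) + comparisonAngle₀ (x i) (x j) (x m) +
            comparisonAngle₀ (x i) (x l) (x m) ≤ 2 * Real.pi ∧
          comparisonAngle₀ (x i) (x j) (x l) ≤
            comparisonAngle₀ (x i) (x j) (x m) + comparisonAngle₀ (x i) (x l) (x m))) := by
  constructor
  · rintro ⟨p, hp⟩ j l m hj hl hm - - -
    have hangle {a b : Fin 4} (ha : i ≠ a) (hb : i ≠ b) : comparisonAngle₀ (x i) (x a) (x b) =
        InnerProductGeometry.angle (p a -ᵥ p i) (p b -ᵥ p i) :=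
      comparisonAngle₀_eq_angle (hi a ha) (hi b hb) (hp i a) (hp i b) (hp a b)
    rw [hangle hj hl, hangle hj hm, hangle hl hm]
    have htriangle := isSphericalTriangle_angle (p j -ᵥ p i) (p l -ᵥ p i) (p m -ᵥ p i)
    exact ⟨htriangle.perimeter_le, htriangle.fst_le⟩
  · intro h
    have hne (k : Fin 3) : i ≠ i.succAbove k := (i.succAbove_ne k).symm
    have hcond (a b c : Fin 3) (hab : a ≠ b) (hac : a ≠ c) (hbc : b ≠ c) :=
      h (i.succAbove a) (i.succAbove b) (i.succAbove c) (hne a) (hne b) (hne c)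
        (Fin.succAbove_right_injective.ne hab) (Fin.succAbove_right_injective.ne hac)
        (Fin.succAbove_right_injective.ne hbc)
    obtain ⟨hsum, h01⟩ := hcond 0 1 2 (by decide) (by decide) (by decide)
    obtain ⟨-, h02⟩ := hcond 0 2 1 (by decide) (by decide) (by decide)
    obtain ⟨-, h12⟩ := hcond 1 2 0 (by decide) (by decide) (by decide)
    rw [comparisonAngle₀_comm (x i) (x (i.succAbove 2)) (x (i.succAbove 1))] at h02
    rw [comparisonAngle₀_comm (x i) (x (i.succAbove 1)) (x (i.succAbove 0)),
      comparisonAngle₀_comm (x i) (x (i.succAbove 2)) (x (i.succAbove 0))] at h12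
    exact IsSphericalTriangle.exists_dist_eq ⟨hsum, h01, h02, h12⟩

/-- Euclidean case of Proposition 6.5: a nondegenerate metric quadruple
embeds isometrically in Euclidean 3-space iff at every point the three
comparison angles have sum at most `2π` and satisfy the triangle
inequality among themselves. -/
theorem quadruple_embeds_iff_comparison_angle_conditions
    {X : Type*} [MetricSpace X] (x : Fin 4 → X)
    (hinj : Function.Injective x)
    (hnd : ∀ i j k : Fin 4, i ≠ j → j ≠ k → i ≠ k →
      dist (x i) (x k) < dist (x i) (x j) + dist (x j) (x k)) :
    (∃ p : Fin 4 → EuclideanSpace ℝ (Fin 3),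
        ∀ i j, dist (p i) (p j) = dist (x i) (x j)) ↔
      (∀ i j l m : Fin 4, i ≠ j → i ≠ l → i ≠ m → j ≠ l → j ≠ m → l ≠ m →
        (comparisonAngle₀ (x i) (x j) (x l) + comparisonAngle₀ (x i) (x j) (x m) +
            comparisonAngle₀ (x i) (x l) (x m) ≤ 2 * Real.pi ∧
          comparisonAngle₀ (x i) (x j) (x l) ≤
            comparisonAngle₀ (x i) (x j) (x m) + comparisonAngle₀ (x i) (x l) (x m))) :=
  ⟨fun hp i =>
      (quadruple_embeds_iff_comparison_angle_conditions_general x i fun _ => hinj.ne).1 hp,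
    fun h =>
      (quadruple_embeds_iff_comparison_angle_conditions_general x 0 fun _ => hinj.ne).2 (h 0)⟩
end

section
/- For any four points p₁, p₂, p₃, p₄ in EuclideanSpace ℝ (Fin 3), the Cayley–Menger determinant of their pairwise distances is nonnegative. -/
/-- The Cayley–Menger determinant of a quadruple with pairwise distances
`d i j`: the determinant of the 5×5 matrix bordered by `0` and ones, whose
inner 4×4 block consists of the squared distances. The index `none` plays
the role of the bordering row and column. -/
noncomputable def cayleyMenger (d : Fin 4 → Fin 4 → ℝ) : ℝ :=
  Matrix.det (Matrix.of fun i j : Option (Fin 4) =>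
    match i, j with
    | none, none => 0
    | none, some _ => 1
    | some _, none => 1
    | some i, some j => d i j ^ 2)

/-!
Eliminating the border together with a base point `o` by a Schur complement turns the matrix of
squared distances, by the law of cosines, into `-2` times the Gram matrix of the vectors from `o`
to the other points. Gram matrices are positive semidefinite, which fixes the sign of the
determinant.
-/

open Matrix

section Bordered

variable {ι R : Type*}

/-- The matrix `A` with a border row and a border column of ones added, meeting in a zero. The
Cayley–Menger determinant is the determinant of the bordered matrix of squared distances. As in
`cayleyMenger`, the border has index `none`. -/
def borderedMatrix [Zero R] [One R] (A : Matrix ι ι R) : Matrix (Option ι) (Option ι) R :=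
  Matrix.of fun
    | none, none => 0
    | none, some _ => 1
    | some _, none => 1
    | some i, some j => A i j

theorem cayleyMenger_eq_det_borderedMatrix (d : Fin 4 → Fin 4 → ℝ) :
    cayleyMenger d = (borderedMatrix (Matrix.of fun i j => d i j ^ 2)).det := by
  rw [cayleyMenger]
  congr 1
  ext (_ | _) (_ | _) <;> rfl

variable [DecidableEq ι]

/-- The decomposition of the index set of a bordered matrix into the border (`0 : Fin 2`), a base
index `o` (`1 : Fin 2`), and the indices other than `o`. -/
def finTwoSumNeEquivOption (o : ι) : Fin 2 ⊕ {i // i ≠ o} ≃ Option ι where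
  toFun := Sum.elim ![none, some o] fun i => some i
  invFun
    | none => .inl 0
    | some i => if h : i = o then .inl 1 else .inr ⟨i, h⟩
  left_inv := by
    rintro (i | ⟨i, hi⟩)
    · fin_cases i <;> simp
    · simp [hi]
  right_inv := by
    rintro (_ | i)
    · rfl
    · by_cases h : i = o <;> simp [h]

theorem borderedMatrix_submatrix_finTwoSumNeEquivOption [Zero R] [One R] (A : Matrix ι ι R)
    (o : ι) :
    (borderedMatrix A).submatrix (finTwoSumNeEquivOption o) (finTwoSumNeEquivOption o) =
      fromBlocks !![0, 1; 1, A o o] (Matrix.of ![fun _ => 1, fun j : {i // i ≠ o} => A o j])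
        (Matrix.of fun i : {i // i ≠ o} => ![1, A i o]) (A.submatrix (↑) (↑)) := by
  ext (i | i) (j | j)
  · fin_cases i <;> fin_cases j <;> rfl
  · fin_cases i <;> rfl
  · fin_cases j <;> rfl
  · rfl

variable [Fintype ι] [CommRing R]

theorem det_borderedMatrix (A : Matrix ι ι R) (o : ι) :
    (borderedMatrix A).det =
      -(Matrix.of fun i j : {i // i ≠ o} => A i j - A i o - A o j + A o o).det := by
  have mul_inv : !![0, 1; 1, A o o] * !![-A o o, 1; 1, 0] = 1 := by simp [one_fin_two]
  let := invertibleOfRightInverse _ _ mul_inv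
  rw [← det_submatrix_equiv_self (finTwoSumNeEquivOption o),
    borderedMatrix_submatrix_finTwoSumNeEquivOption, det_fromBlocks₁₁,
    invOf_eq_right_inv mul_inv, det_fin_two_of, zero_mul, one_mul, zero_sub, neg_one_mul]
  congr 2
  ext i j
  simp only [Matrix.sub_apply, submatrix_apply, Matrix.mul_apply, of_apply, cons_val',
    cons_val_fin_one, Fin.sum_univ_two, cons_val_zero, cons_val_one, one_mul, mul_one, mul_zero,
    add_zero]
  ring

end Bordered

section Points

variable {ι V P : Type*} [SeminormedAddCommGroup V] [InnerProductSpace ℝ V] [PseudoMetricSpace P]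
  [NormedAddTorsor V P]

theorem dist_sq_sub_dist_sq_sub_dist_sq (x y o : P) :
    dist x y ^ 2 - dist x o ^ 2 - dist o y ^ 2 = -2 * inner ℝ (x -ᵥ o) (y -ᵥ o) := by
  rw [dist_comm o y, dist_eq_norm_vsub V x y, dist_eq_norm_vsub V x o, dist_eq_norm_vsub V y o,
    ← vsub_sub_vsub_cancel_right x y o, norm_sub_sq_real]
  ring

theorem neg_one_pow_card_mul_det_borderedMatrix_dist_sq [Fintype ι] [DecidableEq ι] (p : ι → P)
    (o : ι) :
    (-1) ^ Fintype.card ι * (borderedMatrix (Matrix.of fun i j => dist (p i) (p j) ^ 2)).det =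
      2 ^ (Fintype.card ι - 1) * (gram ℝ fun i : {i // i ≠ o} => p i -ᵥ p o).det := by
  have schur_eq : (Matrix.of fun i j : {i // i ≠ o} => dist (p i) (p j) ^ 2 -
      dist (p i) (p o) ^ 2 - dist (p o) (p j) ^ 2 + dist (p o) (p o) ^ 2) =
      (-2 : ℝ) • gram ℝ fun i : {i // i ≠ o} => p i -ᵥ p o := by
    ext i j
    simp [dist_sq_sub_dist_sq_sub_dist_sq (p i) (p j) (p o)]
  have card_ne : Fintype.card {i // i ≠ o} = Fintype.card ι - 1 := Set.card_ne_eq o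
  have sign_mul : (-1 : ℝ) ^ Fintype.card ι * -(-2) ^ (Fintype.card ι - 1) =
      2 ^ (Fintype.card ι - 1) := by
    have : Nonempty ι := ⟨o⟩
    rw [← mul_pow_sub_one Fintype.card_ne_zero, mul_assoc, mul_neg, ← mul_pow]
    norm_num
  simp only [det_borderedMatrix _ o, of_apply]
  rw [schur_eq, det_smul, card_ne, ← neg_mul, ← mul_assoc, sign_mul]

end Points

theorem cayleyMenger_nonneg_general {ι V P : Type*} [SeminormedAddCommGroup V]
    [InnerProductSpace ℝ V] [PseudoMetricSpace P] [NormedAddTorsor V P] [Fintype ι]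
    [DecidableEq ι] (p : ι → P) :
    0 ≤ (-1) ^ Fintype.card ι *
      (borderedMatrix (Matrix.of fun i j => dist (p i) (p j) ^ 2)).det := by
  obtain _ | ⟨⟨o⟩⟩ := isEmpty_or_nonempty ι
  · have row_eq_zero (j : Option ι) :
        borderedMatrix (Matrix.of fun i j => dist (p i) (p j) ^ 2) none j = 0 := by
      obtain _ | i := j
      · rfl
      · exact isEmptyElim i
    rw [det_eq_zero_of_row_eq_zero none row_eq_zero, mul_zero]
  · rw [neg_one_pow_card_mul_det_borderedMatrix_dist_sq p o]
    exact mul_nonneg (by positivity) (posSemidef_gram ℝ _).det_nonneg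

/-- For any four points of Euclidean 3-space, the Cayley–Menger determinant
of their pairwise distances is nonnegative. -/
theorem cayleyMenger_nonneg (p : Fin 4 → EuclideanSpace ℝ (Fin 3)) :
    0 ≤ cayleyMenger (fun i j => dist (p i) (p j)) := by
  simpa [cayleyMenger_eq_det_borderedMatrix, Even.neg_one_pow (show Even 4 by decide)]
    using cayleyMenger_nonneg_general p
end

section
/- (Cayley–Menger embedding criterion for quadruples.) Let (X, d) be a metric space and let x₁, x₂, x₃, x₄ ∈ X. There exist points p₁, p₂, p₃, p₄ in EuclideanSpace ℝ (Fin 3) with dist p_i p_j = d(x_i, x_j) for all i, j, if and only if the Cayley–Menger determinant of the distances d(x_i, x_j) is nonnegative. -/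
/-!
If `pᵢ` realise the distances `dᵢⱼ`, the vectors `pᵢ - p₀` have the inner products
`(d₀ᵢ² + d₀ⱼ² - dᵢⱼ²) / 2`. Since every positive semidefinite matrix is a Gram matrix, such points
exist as soon as the matrix `G` of these numbers is positive semidefinite. Up to a factor `-2`, `G`
is the Schur complement in the Cayley–Menger matrix of the block `!![0, 1; 1, 0]` spanned by the
border and the base point, so the two determinants agree up to a constant, which is positive for
four points. In that case the triangle inequality makes the principal minors of `G` of size at
most two nonnegative, so the characteristic polynomial of `G` has no negative root once
`det G ≥ 0`.
-/

open Matrix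

section PosSemidef

variable {𝕜 ι : Type*} [RCLike 𝕜] [Fintype ι]

open scoped MatrixOrder ComplexOrder in
theorem exists_gram_eq_of_posSemidef {A : Matrix ι ι 𝕜} (hA : A.PosSemidef) :
    ∃ v : ι → EuclideanSpace 𝕜 ι, gram 𝕜 v = A := by
  classical
  obtain ⟨B, rfl⟩ := CStarAlgebra.nonneg_iff_eq_star_mul_self.1 hA.nonneg
  refine ⟨fun i => WithLp.toLp 2 (B.col i), ?_⟩
  ext i j
  simp [mul_apply, star_eq_conjTranspose, PiLp.inner_apply, mul_comm]

open scoped ComplexOrder in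
theorem posSemidef_of_charpoly_eval_ne_zero [DecidableEq ι] {A : Matrix ι ι 𝕜} (hA : A.IsHermitian)
    (hroot : ∀ t : ℝ, t < 0 → A.charpoly.eval (t : 𝕜) ≠ 0) : A.PosSemidef := by
  rw [hA.posSemidef_iff_eigenvalues_nonneg]
  intro i
  by_contra! hneg
  refine hroot _ hneg ?_
  rw [hA.charpoly_eq, Polynomial.eval_prod]
  exact Finset.prod_eq_zero (Finset.mem_univ i) (by simp)

open Polynomial in
theorem charpoly_fin_three {R : Type*} [CommRing R] (A : Matrix (Fin 3) (Fin 3) R) :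
    A.charpoly = X ^ 3 - C A.trace * X ^ 2 +
      C ((A 0 0 * A 1 1 - A 0 1 * A 1 0) + (A 0 0 * A 2 2 - A 0 2 * A 2 0) +
        (A 1 1 * A 2 2 - A 1 2 * A 2 1)) * X - C A.det := by
  simp only [charpoly, det_fin_three, charmatrix_apply_eq, ne_eq, Fin.reduceEq, not_false_eq_true,
    charmatrix_apply_ne, zero_ne_one, one_ne_zero, trace_fin_three, map_add, map_sub, map_mul]
  ring

open Polynomial in
theorem posSemidef_fin_three_of_principal_minors_nonneg {A : Matrix (Fin 3) (Fin 3) ℝ}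
    (hA : A.IsHermitian) (hdiag : ∀ i, 0 ≤ A i i)
    (hminor : ∀ i j, 0 ≤ A i i * A j j - A i j * A j i) (hdet : 0 ≤ A.det) : A.PosSemidef := by
  refine posSemidef_of_charpoly_eval_ne_zero hA fun t ht => ne_of_lt ?_
  have htrace : 0 ≤ A.trace := Finset.sum_nonneg fun i _ => hdiag i
  have hminors := add_nonneg (add_nonneg (hminor 0 1) (hminor 0 2)) (hminor 1 2)
  rw [charpoly_fin_three]
  simp only [eval_sub, eval_add, eval_mul, eval_pow, eval_X, eval_C, RCLike.ofReal_real_eq_id, id]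
  linarith [Odd.pow_neg (by decide : Odd 3) ht, mul_nonneg htrace (sq_nonneg t),
    mul_nonpos_of_nonneg_of_nonpos hminors ht.le]

end PosSemidef

/-- The Cayley–Menger matrix of a family of points with pairwise distances `d i j`; as in
`cayleyMenger`, the index `none` is the bordering row and column. -/
def cayleyMengerMatrix {ι : Type*} (d : ι → ι → ℝ) : Matrix (Option ι) (Option ι) ℝ :=
  of fun i j => i.elim (j.elim 0 fun _ => 1) fun i => j.elim 1 fun j => d i j ^ 2

/-- The matrix of inner products that the vectors from point `0` to the other points must have,
computed from the pairwise distances by the polarization identity. -/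
noncomputable def gramOfDist {n : ℕ} (d : Fin (n + 1) → Fin (n + 1) → ℝ) :
    Matrix (Fin n) (Fin n) ℝ :=
  of fun i j => (d 0 i.succ ^ 2 + d 0 j.succ ^ 2 - d i.succ j.succ ^ 2) / 2

theorem cayleyMenger_eq_det_cayleyMengerMatrix (d : Fin 4 → Fin 4 → ℝ) :
    cayleyMenger d = (cayleyMengerMatrix d).det := by
  rw [cayleyMenger]
  congr 1
  ext (_ | i) (_ | j) <;> rfl

theorem det_fromBlocks_of_mul_eq_one {R ι κ : Type*} [CommRing R] [Fintype ι] [DecidableEq ι]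
    [Fintype κ] [DecidableEq κ] {A A' : Matrix ι ι R} (hA : A * A' = 1) (B : Matrix ι κ R)
    (C : Matrix κ ι R) (D : Matrix κ κ R) :
    (fromBlocks A B C D).det = A.det * (D - C * A' * B).det := by
  let _ : Invertible A := invertibleOfRightInverse A A' hA
  rw [det_fromBlocks₁₁, invOf_eq_right_inv hA]

/-- The indexing of the Cayley–Menger matrix that separates the bordering index (`.inl 0`) and the
base point `0` (`.inl 1`) from the remaining points. -/
def borderBaseEquiv (n : ℕ) : Fin 2 ⊕ Fin n ≃ Option (Fin (n + 1)) :=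
  finSumFinEquiv.trans ((finCongr (Nat.add_comm 2 n)).trans (finSuccEquiv (n + 1)))

theorem borderBaseEquiv_inr {n : ℕ} (i : Fin n) : borderBaseEquiv n (.inr i) = some i.succ := by
  rw [← finSuccEquiv_succ]
  refine congrArg (finSuccEquiv (n + 1)) (Fin.ext ?_)
  change 2 + (i : ℕ) = i + 1 + 1
  omega

/-- The entries of the Cayley–Menger matrix in the rows of the bordering index and of the base point
`0` and in the columns of the remaining points. -/
def borderBaseRows {n : ℕ} (d : Fin (n + 1) → Fin (n + 1) → ℝ) : Matrix (Fin 2) (Fin n) ℝ :=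
  of ![fun _ => 1, fun j => d 0 j.succ ^ 2]

section Distances

variable {n : ℕ} {d : Fin (n + 1) → Fin (n + 1) → ℝ}

theorem cayleyMengerMatrix_submatrix_borderBaseEquiv (hself : d 0 0 = 0)
    (hsymm : ∀ i, d i 0 = d 0 i) :
    (cayleyMengerMatrix d).submatrix (borderBaseEquiv n) (borderBaseEquiv n) =
      fromBlocks !![0, 1; 1, 0] (borderBaseRows d) (borderBaseRows d)ᵀ
        (of fun i j => d i.succ j.succ ^ 2) := by
  have hborder : borderBaseEquiv n (.inl 0) = none := rfl
  have hbase : borderBaseEquiv n (.inl 1) = some 0 := rfl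
  ext (i | i) (j | j)
  · fin_cases i <;> fin_cases j <;> simp [hborder, hbase, cayleyMengerMatrix, hself]
  · fin_cases i <;> simp [hborder, hbase, borderBaseEquiv_inr, borderBaseRows, cayleyMengerMatrix]
  · fin_cases j <;>
      simp [hborder, hbase, borderBaseEquiv_inr, borderBaseRows, cayleyMengerMatrix, hsymm]
  · simp [borderBaseEquiv_inr, cayleyMengerMatrix]

variable (d) in
theorem schurComplement_eq_smul_gramOfDist :
    (of fun i j => d i.succ j.succ ^ 2) -
        (borderBaseRows d)ᵀ * (!![0, 1; 1, 0] : Matrix (Fin 2) (Fin 2) ℝ) * borderBaseRows d =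
      (-2 : ℝ) • gramOfDist d := by
  ext i j
  simp only [borderBaseRows, gramOfDist, Matrix.sub_apply, Matrix.smul_apply, mul_apply, of_apply,
    transpose_apply, smul_eq_mul, Fin.sum_univ_two, cons_val', cons_val_fin_one, cons_val_zero,
    cons_val_one]
  ring

theorem det_cayleyMengerMatrix (hself : d 0 0 = 0) (hsymm : ∀ i, d i 0 = d 0 i) :
    (cayleyMengerMatrix d).det = -(-2) ^ n * (gramOfDist d).det := by
  have hswap : !![0, 1; 1, 0] * !![0, 1; 1, 0] = (1 : Matrix (Fin 2) (Fin 2) ℝ) := by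
    simp [one_fin_two]
  rw [← det_submatrix_equiv_self (borderBaseEquiv n),
    cayleyMengerMatrix_submatrix_borderBaseEquiv hself hsymm, det_fromBlocks_of_mul_eq_one hswap,
    schurComplement_eq_smul_gramOfDist, det_smul, Fintype.card_fin, det_fin_two_of]
  ring

theorem isHermitian_gramOfDist (hsymm : ∀ i j, d i j = d j i) : (gramOfDist d).IsHermitian := by
  ext i j
  simp [gramOfDist, hsymm j.succ, add_comm]

theorem gramOfDist_dist_eq_gram {E : Type*} [SeminormedAddCommGroup E] [InnerProductSpace ℝ E]
    (p : Fin (n + 1) → E) :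
    gramOfDist (fun i j => dist (p i) (p j)) = gram ℝ fun i => p i.succ - p 0 := by
  ext i j
  rw [gram_apply, real_inner_eq_norm_mul_self_add_norm_mul_self_sub_norm_sub_mul_self_div_two,
    sub_sub_sub_cancel_right]
  simp only [gramOfDist, of_apply, dist_comm (p 0), dist_eq_norm, sq]

theorem dist_cons_zero_eq_of_gram_eq_gramOfDist {E : Type*} [SeminormedAddCommGroup E]
    [InnerProductSpace ℝ E] {v : Fin n → E} (hself : ∀ i, d i i = 0)
    (hsymm : ∀ i j, d i j = d j i) (hnonneg : ∀ i j, 0 ≤ d i j) (hv : gram ℝ v = gramOfDist d)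
    (i j : Fin (n + 1)) :
    dist ((Fin.cons 0 v : Fin (n + 1) → E) i) ((Fin.cons 0 v : Fin (n + 1) → E) j) = d i j := by
  have hinner (i j : Fin n) :
      inner ℝ (v i) (v j) = (d 0 i.succ ^ 2 + d 0 j.succ ^ 2 - d i.succ j.succ ^ 2) / 2 :=
    congrFun₂ hv i j
  have hnorm (i : Fin n) : ‖v i‖ ^ 2 = d 0 i.succ ^ 2 := by
    rw [← real_inner_self_eq_norm_sq, hinner, hself]
    ring
  rw [← sq_eq_sq₀ dist_nonneg (hnonneg i j), dist_eq_norm]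
  cases i using Fin.cases <;> cases j using Fin.cases
  · simp [hself]
  · simp [hnorm]
  · simp [hnorm, hsymm _ 0]
  · rw [Fin.cons_succ, Fin.cons_succ, norm_sub_sq_real, hnorm, hnorm, hinner]
    ring

theorem exists_dist_eq_iff_posSemidef_gramOfDist (hself : ∀ i, d i i = 0)
    (hsymm : ∀ i j, d i j = d j i) (hnonneg : ∀ i j, 0 ≤ d i j) :
    (∃ p : Fin (n + 1) → EuclideanSpace ℝ (Fin n), ∀ i j, dist (p i) (p j) = d i j) ↔
      (gramOfDist d).PosSemidef := by
  constructor
  · rintro ⟨p, hp⟩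
    obtain rfl : (fun i j => dist (p i) (p j)) = d := funext₂ hp
    rw [gramOfDist_dist_eq_gram]
    exact posSemidef_gram ℝ _
  · intro hd
    obtain ⟨v, hv⟩ := exists_gram_eq_of_posSemidef hd
    exact ⟨Fin.cons 0 v, dist_cons_zero_eq_of_gram_eq_gramOfDist hself hsymm hnonneg hv⟩

end Distances

section PseudoMetric

variable {n : ℕ} {X : Type*} [PseudoMetricSpace X] (x : Fin (n + 1) → X)

theorem gramOfDist_dist_apply_self (i : Fin n) :
    gramOfDist (fun i j => dist (x i) (x j)) i i = dist (x 0) (x i.succ) ^ 2 := by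
  simp [gramOfDist]

-- The triangle inequality is the Cauchy–Schwarz inequality for the prospective inner products.
theorem abs_gramOfDist_dist_le (i j : Fin n) :
    |gramOfDist (fun i j => dist (x i) (x j)) i j| ≤
      dist (x 0) (x i.succ) * dist (x 0) (x j.succ) := by
  set a := dist (x 0) (x i.succ) with ha
  set b := dist (x 0) (x j.succ) with hb
  set c := dist (x i.succ) (x j.succ)
  have hlower : |a - b| ≤ c := by
    simpa only [ha, hb, dist_comm (x 0)] using abs_dist_sub_le (x i.succ) (x j.succ) (x 0)
  have hupper : c ≤ a + b := dist_triangle_left _ _ _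
  have hgram : gramOfDist (fun i j => dist (x i) (x j)) i j = (a ^ 2 + b ^ 2 - c ^ 2) / 2 := rfl
  rw [hgram, abs_le]
  constructor
  · linarith [pow_le_pow_left₀ dist_nonneg hupper 2]
  · linarith [sq_le_sq.2 (hlower.trans (le_abs_self c))]

theorem gramOfDist_dist_minor_nonneg (i j : Fin n) :
    0 ≤ gramOfDist (fun i j => dist (x i) (x j)) i i *
        gramOfDist (fun i j => dist (x i) (x j)) j j -
      gramOfDist (fun i j => dist (x i) (x j)) i j *
        gramOfDist (fun i j => dist (x i) (x j)) j i := by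
  have hsymm := (isHermitian_gramOfDist fun i j => dist_comm (x i) (x j)).apply i j
  rw [star_trivial] at hsymm
  rw [hsymm, gramOfDist_dist_apply_self, gramOfDist_dist_apply_self, ← mul_pow, ← sq, sub_nonneg]
  obtain ⟨hlower, hupper⟩ := abs_le.1 (abs_gramOfDist_dist_le x i j)
  exact sq_le_sq' hlower hupper

end PseudoMetric

theorem posSemidef_gramOfDist_dist_iff_det_nonneg {X : Type*} [PseudoMetricSpace X]
    (x : Fin 4 → X) :
    (gramOfDist fun i j => dist (x i) (x j)).PosSemidef ↔
      0 ≤ (gramOfDist fun i j => dist (x i) (x j)).det := by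
  refine ⟨PosSemidef.det_nonneg, posSemidef_fin_three_of_principal_minors_nonneg
    (isHermitian_gramOfDist fun i j => dist_comm (x i) (x j)) (fun i => ?_)
    (gramOfDist_dist_minor_nonneg x)⟩
  rw [gramOfDist_dist_apply_self]
  positivity

theorem quadruple_embeds_iff_cayleyMenger_nonneg_general
    {X : Type*} [PseudoMetricSpace X] (x : Fin 4 → X) :
    (∃ p : Fin 4 → EuclideanSpace ℝ (Fin 3),
        ∀ i j, dist (p i) (p j) = dist (x i) (x j)) ↔
      0 ≤ cayleyMenger (fun i j => dist (x i) (x j)) := by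
  rw [exists_dist_eq_iff_posSemidef_gramOfDist (fun i => dist_self (x i))
      (fun i j => dist_comm (x i) (x j)) (fun _ _ => dist_nonneg),
    posSemidef_gramOfDist_dist_iff_det_nonneg, cayleyMenger_eq_det_cayleyMengerMatrix,
    det_cayleyMengerMatrix (dist_self (x 0)) fun i => dist_comm (x i) (x 0)]
  norm_num

/-- Cayley–Menger embedding criterion for quadruples: a metric quadruple
embeds isometrically in Euclidean 3-space iff the Cayley–Menger determinant
of its pairwise distances is nonnegative. -/
theorem quadruple_embeds_iff_cayleyMenger_nonneg
    {X : Type*} [MetricSpace X] (x : Fin 4 → X) :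
    (∃ p : Fin 4 → EuclideanSpace ℝ (Fin 3),
        ∀ i j, dist (p i) (p j) = dist (x i) (x j)) ↔
      0 ≤ cayleyMenger (fun i j => dist (x i) (x j)) := by
  exact quadruple_embeds_iff_cayleyMenger_nonneg_general x
end
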